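/- Let G be a finite simple graph on n ≥ 36 vertices with minimum degree at least 6 that contains no subgraph isomorphic to the complete graph K₇. Suppose that for every subset S of V(G) with |S| ≥ 2 the inequality 3a₁ + 2a₃ + a₅ + 4 ≤ 4|S| holds, where, for i ∈ {1, 3, 5}, aᵢ denotes the number of connected components of G∖S having exactly i vertices. Then G has a matching of size at least (3n + 4)/7; equivalently, there is a matching M of G with 7|M| ≥ 3n + 4. -/

import Mathlib

open SimpleGraph

namespace SimpleGraph

lemma Iso.ncard_supp_connectedComponentEquiv {V W : Type*} {G : SimpleGraph V} {H : SimpleGraph W}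
    (φ : G ≃g H) (c : G.ConnectedComponent) :
    (φ.connectedComponentEquiv c).supp.ncard = c.supp.ncard :=
  (Nat.card_congr (ConnectedComponent.isoEquivSupp φ c)).symm

lemma Iso.ncard_oddComponents_eq {V W : Type*} {G : SimpleGraph V} {H : SimpleGraph W}
    (φ : G ≃g H) : G.oddComponents.ncard = H.oddComponents.ncard :=
  Nat.card_congr <| φ.connectedComponentEquiv.subtypeEquiv fun c ↦ by
    rw [Set.mem_ofPred_eq, Set.mem_ofPred_eq, φ.ncard_supp_connectedComponentEquiv c]

/-- The join of `G` with the complete graph on `W`. -/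
abbrev joinTop {V : Type*} (G : SimpleGraph V) (W : Type*) : SimpleGraph (V ⊕ W) :=
  (G ⊕g (⊤ : SimpleGraph W)) ⊔ completeBipartiteGraph V W

lemma ncard_oddComponents_le_one_of_isUniversal {V : Type*} [Finite V] {G : SimpleGraph V} {x : V}
    (hx : ∀ y, y ≠ x → G.Adj x y) : G.oddComponents.ncard ≤ 1 := by
  have hG : G.Preconnected := by
    have key : ∀ y, G.Reachable x y := fun y ↦ by
      by_cases hy : y = x
      · exact hy ▸ .rfl
      · exact (hx y hy).reachable
    exact fun a b ↦ (key a).symm.trans (key b)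
  have := hG.subsingleton_connectedComponent
  exact Set.ncard_le_one_of_subsingleton _

/-- Deleting from the join a set containing all of `W` amounts to deleting its trace on `V`
from `G`. -/
noncomputable def joinTopDeleteVertsIso {V W : Type*} (G : SimpleGraph V) (u : Set (V ⊕ W))
    (hu : ∀ w, Sum.inr w ∈ u) :
    G.induce ((Sum.inl ⁻¹' u)ᶜ : Set V) ≃g
      ((⊤ : (G.joinTop W).Subgraph).deleteVerts u).coe where
  toEquiv := Equiv.ofBijective (fun v ↦ ⟨Sum.inl v.1, trivial, v.2⟩) <| by
    refine ⟨fun a b hab ↦ by simpa [Subtype.ext_iff] using hab, ?_⟩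
    rintro ⟨v | w, hv⟩
    · exact ⟨⟨v, by simpa using hv⟩, rfl⟩
    · exact absurd (hu w) hv.2
  map_rel_iff' {a b} := by
    have ha : Sum.inl a.1 ∉ u := a.2
    have hb : Sum.inl b.1 ∉ u := b.2
    simp [Equiv.ofBijective, ha, hb]

/-- The edges of a matching number half the vertices it covers. -/
lemma Subgraph.IsMatching.two_mul_ncard_edgeSet {V : Type*} [Finite V] {G : SimpleGraph V}
    {M : G.Subgraph} (hM : M.IsMatching) : 2 * M.edgeSet.ncard = M.verts.ncard := by
  classical
  have := Fintype.ofFinite V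
  have key := M.spanningCoe.sum_degrees_eq_twice_card_edges
  have hdeg : ∀ v, M.spanningCoe.degree v = if v ∈ M.verts then 1 else 0 := fun v ↦ by
    rw [Subgraph.degree_spanningCoe]
    split_ifs with hv
    · exact isMatching_iff_forall_degree.mp hM v hv
    · exact Subgraph.degree_of_notMem_verts hv
  simp only [hdeg, Finset.sum_boole] at key
  rw [← edgeSet_spanningCoe, Set.ncard_eq_toFinset_card', Set.ncard_eq_toFinset_card']
  rw [← Set.toFinset_ofPred, Nat.cast_id] at key
  exact key.symm

/-- A perfect matching of the join of `G` with the complete graph on `W` restricts to a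
matching of `G` missing at most `|W|` vertices. -/
lemma exists_isMatching_of_joinTop {V : Type*} [Finite V] {W : Type*} [Finite W]
    {G : SimpleGraph V} {M : (G.joinTop W).Subgraph} (hM : M.IsPerfectMatching) :
    ∃ N : G.Subgraph, N.IsMatching ∧ Nat.card V ≤ N.verts.ncard + Nat.card W := by
  let N : G.Subgraph :=
    { verts := {v | ∃ w, M.Adj (.inl v) (.inl w)}
      Adj v w := M.Adj (.inl v) (.inl w)
      adj_sub h := by simpa using M.adj_sub h
      edge_vert h := ⟨_, h⟩
      symm := ⟨fun _ _ h ↦ h.symm⟩ }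
  refine ⟨N, ?_, ?_⟩
  · rintro v ⟨w, hw⟩
    exact ⟨w, hw, fun y hy ↦ Sum.inl_injective (hM.1.eq_of_adj_left hy hw)⟩
  · have hpartner : ∀ v : (N.vertsᶜ : Set V), ∃ w : W, M.Adj (.inl v.1) (.inr w) := by
      rintro ⟨v, hv⟩
      obtain ⟨x | w, hx, -⟩ := hM.1 (hM.2 (.inl v))
      · exact absurd ⟨x, hx⟩ hv
      · exact ⟨w, hx⟩
    choose f hf using hpartner
    have hinj : f.Injective := fun a b hab ↦ by
      have := hM.1.eq_of_adj_right (hf a) (hab ▸ hf b)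
      exact Subtype.ext (Sum.inl_injective this)
    have := Nat.card_le_card_of_injective f hinj
    rw [Nat.card_coe_set_eq] at this
    have := Set.ncard_add_ncard_compl N.verts
    lia

/-- **Tutte–Berge formula**, existence direction: if deleting any set `S` leaves at most
`|S| + d` odd components, where `d` has the parity of the order, then some matching misses at
most `d` vertices. -/
theorem exists_isMatching_of_ncard_oddComponents_le {V : Type*} [Finite V] {G : SimpleGraph V}
    {d : ℕ} (hd : Even (Nat.card V + d))
    (hG : ∀ S : Set V, (G.induce (Sᶜ : Set V)).oddComponents.ncard ≤ S.ncard + d) :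
    ∃ M : G.Subgraph, M.IsMatching ∧ Nat.card V ≤ 2 * M.edgeSet.ncard + d := by
  obtain ⟨M, hM⟩ : ∃ M : (G.joinTop (Fin d)).Subgraph, M.IsPerfectMatching := by
    refine tutte.mpr fun u hu ↦ ?_
    rw [IsTutteViolator] at hu
    by_cases hall : ∀ w, Sum.inr w ∈ u
    · rw [← (joinTopDeleteVertsIso G u hall).ncard_oddComponents_eq] at hu
      have hcard : u.ncard = (Sum.inl ⁻¹' u : Set V).ncard + d := by
        have : u = Sum.inl '' (Sum.inl ⁻¹' u : Set V) ∪ Set.range Sum.inr := by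
          ext (v | w) <;> simp [hall]
        rw [this, Set.ncard_union_eq, Set.ncard_image_of_injective _ Sum.inl_injective,
          ← Set.image_univ, Set.ncard_image_of_injective _ Sum.inr_injective]
        · simp [Set.preimage_image_eq _ Sum.inl_injective]
        · rw [Set.disjoint_left]
          rintro _ ⟨v, -, rfl⟩
          simp
      have := hG (Sum.inl ⁻¹' u)
      lia
    · push Not at hall
      obtain ⟨w, hw⟩ := hall
      have hle : ((⊤ : (G.joinTop (Fin d)).Subgraph).deleteVerts u).coe.oddComponents.ncard ≤
          1 := by
        refine ncard_oddComponents_le_one_of_isUniversal (x := ⟨.inr w, by simpa using! hw⟩) ?_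
        rintro ⟨y, hy⟩ hne
        have hyu : y ∉ u := hy.2
        rcases y with v | w'
        · simp [hw, hyu]
        · have : w ≠ w' := fun h ↦ hne (by simp [h])
          simp [hw, hyu, this]
      obtain rfl : u = ∅ := (Set.ncard_eq_zero).mp (by lia)
      have hodd := odd_ncard_oddComponents
        ((⊤ : (G.joinTop (Fin d)).Subgraph).deleteVerts ∅).coe
      rw [show ((⊤ : (G.joinTop (Fin d)).Subgraph).deleteVerts ∅).coe.oddComponents.ncard = 1 by
        rw [Set.ncard_empty] at hu; lia] at hodd
      have : Odd (Nat.card V + d) := by simpa using! hodd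
      exact Nat.not_odd_iff_even.mpr hd this
  obtain ⟨N, hN, hcard⟩ := exists_isMatching_of_joinTop hM
  refine ⟨N, hN, ?_⟩
  rw [hN.two_mul_ncard_edgeSet]
  simpa using hcard

open Classical in
lemma sum_ncard_supp {V : Type*} [Fintype V] (G : SimpleGraph V) :
    ∑ c : G.ConnectedComponent, c.supp.ncard = Fintype.card V := by
  have := Finset.card_eq_sum_card_fiberwise (s := Finset.univ) (t := Finset.univ)
    (f := G.connectedComponentMk) (by simp)
  rw [← Finset.card_univ, this]
  refine Finset.sum_congr rfl fun c _ ↦ ?_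
  rw [Set.ncard_eq_toFinset_card']
  congr 1
  ext v
  simp

/-- A vertex of a component of `G ∖ S` has all its neighbours in `S` or in that component. -/
lemma neighborSet_subset_of_mem_supp {V : Type*} {G : SimpleGraph V} {S : Set V}
    {c : (G.induce (Sᶜ : Set V)).ConnectedComponent} {v : (Sᶜ : Set V)} (hv : v ∈ c.supp) :
    G.neighborSet v ⊆ S ∪ (Subtype.val '' c.supp) \ {v.1} := by
  intro w hw
  by_cases hwS : w ∈ S
  · exact .inl hwS
  · refine .inr ⟨⟨⟨w, hwS⟩, ?_, rfl⟩, fun h ↦ G.ne_of_adj hw h.symm⟩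
    exact c.mem_supp_of_adj_mem_supp hv (by simpa using hw)

lemma degree_lt_ncard_add_ncard_supp {V : Type*} [Fintype V] {G : SimpleGraph V}
    [DecidableRel G.Adj] {S : Set V} {c : (G.induce (Sᶜ : Set V)).ConnectedComponent}
    {v : (Sᶜ : Set V)} (hv : v ∈ c.supp) : G.degree v < S.ncard + c.supp.ncard := by
  have hle := Set.ncard_le_ncard (neighborSet_subset_of_mem_supp hv)
  have hunion := Set.ncard_union_le S ((Subtype.val '' c.supp) \ {v.1})
  have hdiff := Set.ncard_sdiff_singleton_add_one (Set.mem_image_of_mem Subtype.val hv)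
  rw [Set.ncard_image_of_injective _ Subtype.val_injective] at hdiff
  rw [← card_neighborSet_eq_degree, ← Nat.card_eq_fintype_card, Nat.card_coe_set_eq]
  lia

/-- If all degrees are at least `k`, a component on `k + 1` vertices is a clique. -/
lemma ncard_supp_ne_of_cliqueFree {V : Type*} [Fintype V] {G : SimpleGraph V}
    [DecidableRel G.Adj] {k : ℕ} (hδ : ∀ v, k ≤ G.degree v) (hK : G.CliqueFree (k + 1))
    (c : (G.induce ((∅ : Set V)ᶜ)).ConnectedComponent) : c.supp.ncard ≠ k + 1 := by
  classical
  intro hc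
  let T : Set V := Subtype.val '' c.supp
  have hT : T.ncard = k + 1 := by
    rw [Set.ncard_image_of_injective _ Subtype.val_injective, hc]
  refine hK T.toFinset ⟨?_, by rw [← Set.ncard_eq_toFinset_card', hT]⟩
  rw [Set.coe_toFinset]
  rintro _ ⟨v, hv, rfl⟩ w hw hne
  have hsub := neighborSet_subset_of_mem_supp hv
  rw [Set.empty_union] at hsub
  have hdiff := Set.ncard_sdiff_singleton_add_one (Set.mem_image_of_mem Subtype.val hv)
  have hdeg := hδ v
  rw [← card_neighborSet_eq_degree, ← Nat.card_eq_fintype_card, Nat.card_coe_set_eq] at hdeg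
  have heq := Set.eq_of_subset_of_ncard_le hsub (by lia)
  exact heq.ge ⟨hw, hne.symm⟩

/-- If every odd component has at least `k` vertices then there are at most `|V| / k` of them. -/
lemma mul_ncard_oddComponents_le {V : Type*} [Finite V] {G : SimpleGraph V} {k : ℕ}
    (hk : ∀ c ∈ G.oddComponents, k ≤ c.supp.ncard) :
    k * G.oddComponents.ncard ≤ Nat.card V := by
  classical
  have := Fintype.ofFinite V
  rw [Nat.card_eq_fintype_card, ← sum_ncard_supp G, oddComponents, ← Finset.coe_filter_univ,
    Set.ncard_coe_finset, mul_comm, ← smul_eq_mul]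
  exact (Finset.card_nsmul_le_sum _ _ _ fun c hc ↦ hk c (by simpa using hc)).trans
    (Finset.sum_le_sum_of_subset (Finset.filter_subset _ _))

lemma seven_mul_ncard_oddComponents_le {V : Type*} [Finite V] (G : SimpleGraph V) :
    7 * G.oddComponents.ncard ≤ Nat.card V
      + 6 * {c : G.ConnectedComponent | c.supp.ncard = 1}.ncard
      + 4 * {c : G.ConnectedComponent | c.supp.ncard = 3}.ncard
      + 2 * {c : G.ConnectedComponent | c.supp.ncard = 5}.ncard := by
  classical
  have := Fintype.ofFinite V
  have hncard (p : G.ConnectedComponent → Prop) : {c | p c}.ncard = ∑ c, if p c then 1 else 0 := by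
    rw [← Finset.coe_filter_univ, Set.ncard_coe_finset, Finset.card_filter]
  rw [Nat.card_eq_fintype_card, ← sum_ncard_supp G, oddComponents]
  simp only [hncard, Finset.mul_sum, ← Finset.sum_add_distrib]
  refine Finset.sum_le_sum fun c _ ↦ ?_
  have : Odd c.supp.ncard ↔ c.supp.ncard % 2 = 1 := Nat.odd_iff
  split_ifs <;> lia

end SimpleGraph

/-- Proposition 1: let `G` be a finite simple graph on `n ≥ 36` vertices with minimum degree at
least 6 and with no `K₇` subgraph. If for every `S ⊆ V(G)` with `|S| ≥ 2` the inequality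
`3a₁ + 2a₃ + a₅ + 4 ≤ 4|S|` holds, where `aᵢ` is the number of components of `G ∖ S` with
exactly `i` vertices, then `G` has a matching `M` with `7|M| ≥ 3n + 4`. -/
theorem stmt_10 {V : Type*} [Fintype V] (G : SimpleGraph V) [DecidableRel G.Adj]
    (hn : 36 ≤ Fintype.card V)
    (hδ : ∀ v : V, 6 ≤ G.degree v)
    (hK7 : G.CliqueFree 7)
    (h : ∀ S : Set V, 2 ≤ S.ncard →
      3 * {c : (G.induce (Sᶜ : Set V)).ConnectedComponent | c.supp.ncard = 1}.ncard
        + 2 * {c : (G.induce (Sᶜ : Set V)).ConnectedComponent | c.supp.ncard = 3}.ncard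
        + {c : (G.induce (Sᶜ : Set V)).ConnectedComponent | c.supp.ncard = 5}.ncard
        + 4 ≤ 4 * S.ncard) :
    ∃ M : G.Subgraph, M.IsMatching ∧ 3 * Fintype.card V + 4 ≤ 7 * M.edgeSet.ncard := by
  classical
  have hbound (S : Set V) : 7 * (G.induce (Sᶜ : Set V)).oddComponents.ncard + 8 ≤
      Fintype.card V + 7 * S.ncard := by
    have hcompl := Set.ncard_add_ncard_compl S
    rw [← Nat.card_coe_set_eq Sᶜ, Nat.card_eq_fintype_card (α := V)] at hcompl
    have hsupp (c : (G.induce (Sᶜ : Set V)).ConnectedComponent) :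
        6 < S.ncard + c.supp.ncard := by
      obtain ⟨v, hv⟩ := c.nonempty_supp
      exact (hδ v).trans_lt (degree_lt_ncard_add_ncard_supp hv)
    obtain hS | hS | hS : S.ncard = 0 ∨ S.ncard = 1 ∨ 2 ≤ S.ncard := by lia
    · obtain rfl := (Set.ncard_eq_zero).mp hS
      have := mul_ncard_oddComponents_le (G := G.induce ((∅ : Set V)ᶜ)) (k := 9) fun c hc ↦ by
        have := hsupp c
        have := ncard_supp_ne_of_cliqueFree hδ hK7 c
        have := Nat.odd_iff.mp hc
        lia
      lia
    · have := mul_ncard_oddComponents_le (G := G.induce (Sᶜ : Set V)) (k := 7) fun c hc ↦ by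
        have := hsupp c
        have := Nat.odd_iff.mp hc
        lia
      lia
    · have := seven_mul_ncard_oddComponents_le (G.induce (Sᶜ : Set V))
      have := h S hS
      lia
  let m := (3 * Fintype.card V + 10) / 7
  obtain ⟨M, hM, hcard⟩ := exists_isMatching_of_ncard_oddComponents_le (G := G)
    (d := Fintype.card V - 2 * m) (by rw [Nat.card_eq_fintype_card, Nat.even_iff]; lia)
    fun S ↦ by
      have hparity := odd_ncard_oddComponents (G.induce (Sᶜ : Set V))
      rw [Nat.card_coe_set_eq, Nat.odd_iff, Nat.odd_iff] at hparity
      have hcompl := Set.ncard_add_ncard_compl S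
      rw [Nat.card_eq_fintype_card] at hcompl
      have := hbound S
      lia
  rw [Nat.card_eq_fintype_card] at hcard
  exact ⟨M, hM, by lia⟩
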